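/- Let h be a graphon and, for N ∈ ℕ, let h̄_N be the N-block approximant of h, i.e., the graphon whose value on the block [(i−1)/N,i/N) × [(j−1)/N,j/N) equals N² times the integral of h over that block, for all 1 ≤ i,j ≤ N. Then ‖L_{h̄_N}‖ ≤ ‖L_h‖. -/

import Mathlib

/-!
Write `K = ‖L_h‖` and let `P` be the averaging projection of `L²([0,1])` onto functions that are
constant on blocks. For the block approximant `g`, whose degree on the `i`-th block is `d i`, the
operator `L_g` respects the splitting `u = P u + (u - P u)`:

* on step functions `L_g = P L_h P`, so this part is bounded by `K`
  (`integral_lapApply_stepFun` together with Cauchy–Schwarz on each block, `sq_integral_le`);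
* on functions with zero mean on every block, `L_g` is multiplication by the degree `d i`, which
  is the average over the block of the degree function of `h`. It is at most `K`
  (`sum_blockMass_le`): testing `L_h` on the indicator of an interval `S` gives
  `∫_S deg ≤ K |S| + |S|²`, and cutting a block into ever smaller intervals removes the
  quadratic term (`integral_degFun_le`).

The two parts of `L_g u` are orthogonal on each block, so their squared norms add up to at most
`K² ‖u‖²`. The values of `g` where a coordinate equals `1` are not determined by the block
condition, but they lie on a null set.
-/

open MeasureTheory Filter Set
open scoped BigOperators

noncomputable section

/-- The unit interval `[0,1] ⊆ ℝ`. -/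
def UI : Set ℝ := Set.Icc 0 1

/-- A graphon: a symmetric measurable function with values in `[0,1]`. -/
def IsGraphon (f : ℝ → ℝ → ℝ) : Prop :=
  (∀ x y, f x y = f y x) ∧ Measurable (Function.uncurry f) ∧
    ∀ x y, f x y ∈ Set.Icc (0 : ℝ) 1

/-- Membership in `L²([0,1])`. -/
def MemL2 (u : ℝ → ℝ) : Prop :=
  Measurable u ∧ IntegrableOn (fun x => u x ^ 2) UI

/-- The `L²([0,1])`-norm. -/
def l2 (u : ℝ → ℝ) : ℝ := (∫ x in UI, u x ^ 2) ^ (1/2 : ℝ)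

/-- The Laplacian graphon operator applied to `u`. -/
def lapApply (f : ℝ → ℝ → ℝ) (u : ℝ → ℝ) (x : ℝ) : ℝ :=
  ∫ y in UI, f x y * (u x - u y)

/-- The operator norm of the Laplacian graphon operator. -/
def lapNorm (f : ℝ → ℝ → ℝ) : ℝ :=
  sSup {c | ∃ u : ℝ → ℝ, MemL2 u ∧ l2 u = 1 ∧ c = l2 (lapApply f u)}

/-- The degree function of a graphon. -/
def degFun (f : ℝ → ℝ → ℝ) (x : ℝ) : ℝ := ∫ y in UI, f x y

/-- The essential supremum of the degree function. -/
def degSup (f : ℝ → ℝ → ℝ) : ℝ := essSup (degFun f) (volume.restrict UI)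

/-- Bernoulli relative entropy `R(a|b)`. -/
def relEnt (a b : ℝ) : ℝ :=
  a * Real.log (a / b) + (1 - a) * Real.log ((1 - a) / (1 - b))

/-- The relative entropy functional `I_r(h)`. -/
def Ir (r h : ℝ → ℝ → ℝ) : ℝ :=
  ∫ p in UI ×ˢ UI, relEnt (h p.1 p.2) (r p.1 p.2)

/-- The downward rate function `ψ_r`. -/
def psiLow (r : ℝ → ℝ → ℝ) (β : ℝ) : ℝ :=
  sInf {c | ∃ h, IsGraphon h ∧ lapNorm h ≤ β ∧ c = Ir r h}

/-- A Lebesgue-measure-preserving bijection of `[0,1]`. -/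
structure MPB where
  toFun : ℝ → ℝ
  bijOn : Set.BijOn toFun UI UI
  measurePreserving :
    MeasurePreserving toFun (volume.restrict UI) (volume.restrict UI)

/-- The cut distance `d_□`. -/
def cutDist (f g : ℝ → ℝ → ℝ) : ℝ :=
  sSup {c | ∃ S T : Set ℝ, MeasurableSet S ∧ MeasurableSet T ∧ S ⊆ UI ∧ T ⊆ UI ∧
    c = |∫ x in S, ∫ y in T, (f x y - g x y)|}

/-- The cut metric `δ_□`. -/
def cutMetric (f g : ℝ → ℝ → ℝ) : ℝ :=
  sInf {c | ∃ φ : MPB, c = cutDist f (fun x y => g (φ.toFun x) (φ.toFun y))}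

/-- The rate function `J_r` (infimum of `I_r` over relabelings). -/
def Jrate (r h : ℝ → ℝ → ℝ) : ℝ :=
  sInf {c | ∃ φ : MPB, c = Ir r (fun x y => h (φ.toFun x) (φ.toFun y))}

/-- Open sets of graphons in the topology induced by the cut metric. -/
def CutOpen (O : Set (ℝ → ℝ → ℝ)) : Prop :=
  ∀ f ∈ O, ∃ ε > 0, ∀ g, IsGraphon g → cutMetric f g < ε → g ∈ O

/-- Closed sets of graphons in the topology induced by the cut metric. -/
def CutClosed (C : Set (ℝ → ℝ → ℝ)) : Prop :=
  ∀ f, IsGraphon f → f ∉ C → ∃ ε > 0, ∀ g, IsGraphon g → cutMetric f g < ε → g ∉ C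

/-- Adjacency matrices of simple graphs on `N` vertices. -/
abbrev AdjMat (N : ℕ) :=
  {A : Fin N → Fin N → Bool // (∀ i j, A i j = A j i) ∧ ∀ i, A i i = false}

/-- Probability weight of a configuration of the inhomogeneous ERRG. -/
def errgWeight (N : ℕ) (p : Fin N → Fin N → ℝ) (A : AdjMat N) : ℝ :=
  ∏ i : Fin N, ∏ j : Fin N,
    if i < j then (if A.1 i j then p i j else 1 - p i j) else 1

open Classical in
/-- The law of the inhomogeneous ERRG with edge probabilities `p`. -/
def errgProb (N : ℕ) (p : Fin N → Fin N → ℝ) (E : Set (AdjMat N)) : ℝ :=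
  ∑ A : AdjMat N, if A ∈ E then errgWeight N p A else 0

/-- Degree of vertex `i`. -/
def degRG {N : ℕ} (A : AdjMat N) (i : Fin N) : ℝ :=
  ∑ j : Fin N, if A.1 i j then (1 : ℝ) else 0

/-- The Laplacian matrix `L = D - A`. -/
def lapMat {N : ℕ} (A : AdjMat N) : Matrix (Fin N) (Fin N) ℝ :=
  fun i j => (if i = j then degRG A i else 0) - (if A.1 i j then 1 else 0)

/-- The largest eigenvalue of a matrix. -/
def lambdaMax {N : ℕ} (M : Matrix (Fin N) (Fin N) ℝ) : ℝ :=
  sSup {μ | ∃ v : Fin N → ℝ, v ≠ 0 ∧ M.mulVec v = μ • v}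

/-- The spectral norm (largest absolute value of an eigenvalue) of a matrix. -/
def specNorm {N : ℕ} (M : Matrix (Fin N) (Fin N) ℝ) : ℝ :=
  sSup {c | ∃ μ : ℝ, (∃ v : Fin N → ℝ, v ≠ 0 ∧ M.mulVec v = μ • v) ∧ c = |μ|}

/-- The `i`-th block of `[0,1]` divided into `N` blocks. -/
def blk (N : ℕ) (i : Fin N) : Set ℝ :=
  Set.Ico (((i : ℕ) : ℝ) / N) ((((i : ℕ) : ℝ) + 1) / N)

open Classical in
/-- The empirical graphon of a graph on `N` vertices. -/
def empGraphon (N : ℕ) (A : AdjMat N) (x y : ℝ) : ℝ :=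
  if ∃ i j : Fin N, A.1 i j = true ∧ x ∈ blk N i ∧ y ∈ blk N j then 1 else 0

/-- A function that is constant on the `N × N` blocks. -/
def IsBlockGraphon (N : ℕ) (f : ℝ → ℝ → ℝ) : Prop :=
  ∀ i j : Fin N, ∀ x₁ ∈ blk N i, ∀ x₂ ∈ blk N i, ∀ y₁ ∈ blk N j, ∀ y₂ ∈ blk N j,
    f x₁ y₁ = f x₂ y₂

/-- Edge probabilities induced by a block graphon. -/
def pOf (N : ℕ) (f : ℝ → ℝ → ℝ) (i j : Fin N) : ℝ :=
  f (((i : ℕ) : ℝ) / N) (((j : ℕ) : ℝ) / N)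

/-- The cumulant generating function `Λ_r(x,θ)`. -/
def Lam (r : ℝ → ℝ → ℝ) (x θ : ℝ) : ℝ :=
  ∫ y in UI, Real.log (r x y * Real.exp θ + 1 - r x y)

/-- The Legendre transform `J_r(x,β)`. -/
def Jfun (r : ℝ → ℝ → ℝ) (x β : ℝ) : ℝ :=
  ⨆ θ : ℝ, (θ * β - Lam r x θ)

/-- The upward rate function `ψ̂_r`. -/
def psiHat (r : ℝ → ℝ → ℝ) (β : ℝ) : ℝ :=
  ⨅ x : UI, Jfun r (x : ℝ) β

/-- The variance function `v_r`. -/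
def vr (r : ℝ → ℝ → ℝ) (x : ℝ) : ℝ := ∫ y in UI, r x y * (1 - r x y)

/-- The tilted kernel `r̂` (Cramér transform with parameter `θ`). -/
def tilt (r : ℝ → ℝ → ℝ) (θ x y : ℝ) : ℝ :=
  Real.exp θ * r x y / (Real.exp θ * r x y + 1 - r x y)

/-- The tilted mean degree. -/
def degMoment (r : ℝ → ℝ → ℝ) (x θ : ℝ) : ℝ := ∫ y in UI, tilt r θ x y

/-- Extended-real-valued logarithm with `log x = ⊥` for `x ≤ 0`. -/
def elog (x : ℝ) : EReal := if x ≤ 0 then ⊥ else ((Real.log x : ℝ) : EReal)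

/-- Standing assumptions on the reference graphon. -/
def GraphonAssump (r : ℝ → ℝ → ℝ) : Prop :=
  IsGraphon r ∧ (∀ x ∈ UI, ∀ y ∈ UI, r x y ∈ Set.Ioo (0:ℝ) 1) ∧
    IntegrableOn (fun p : ℝ × ℝ => Real.log (r p.1 p.2)) (UI ×ˢ UI) ∧
    IntegrableOn (fun p : ℝ × ℝ => Real.log (1 - r p.1 p.2)) (UI ×ˢ UI)

/-- Standing convergence assumptions on the block graphons `r_N`. -/
def SeqAssump (r : ℝ → ℝ → ℝ) (rN : ℕ → ℝ → ℝ → ℝ) : Prop :=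
  (∀ N, IsGraphon (rN N)) ∧ (∀ N, IsBlockGraphon N (rN N)) ∧
  (∀ N, ∀ x ∈ UI, ∀ y ∈ UI, rN N x y ∈ Set.Ioo (0:ℝ) 1) ∧
  (∀ᵐ p ∂(volume.restrict (UI ×ˢ UI)),
    Tendsto (fun N => rN N (p : ℝ × ℝ).1 p.2) atTop (nhds (r p.1 p.2))) ∧
  Tendsto (fun N => ∫ p in UI ×ˢ UI, |rN N p.1 p.2 - r p.1 p.2|) atTop (nhds 0) ∧
  Tendsto (fun N => ∫ p in UI ×ˢ UI,
    |Real.log (rN N p.1 p.2) - Real.log (r p.1 p.2)|) atTop (nhds 0) ∧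
  Tendsto (fun N => ∫ p in UI ×ˢ UI,
    |Real.log (1 - rN N p.1 p.2) - Real.log (1 - r p.1 p.2)|) atTop (nhds 0)

/-- A graphon bounded between `rm` and `rp`, `0 < rm ≤ rp < 1`. -/
def BoundedGraphon (r : ℝ → ℝ → ℝ) (rm rp : ℝ) : Prop :=
  IsGraphon r ∧ 0 < rm ∧ rm ≤ rp ∧ rp < 1 ∧
    ∀ x ∈ UI, ∀ y ∈ UI, rm ≤ r x y ∧ r x y ≤ rp

/-- Sup-norm convergence on `[0,1]²`. -/
def SupConv (r : ℝ → ℝ → ℝ) (rN : ℕ → ℝ → ℝ → ℝ) : Prop :=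
  ∀ ε > 0, ∃ N₀, ∀ N ≥ N₀, ∀ x ∈ UI, ∀ y ∈ UI, |rN N x y - r x y| ≤ ε

/-- Pointwise convergence on `[0,1]²`. -/
def PtConv (r : ℝ → ℝ → ℝ) (rN : ℕ → ℝ → ℝ → ℝ) : Prop :=
  ∀ x ∈ UI, ∀ y ∈ UI, Tendsto (fun N => rN N x y) atTop (nhds (r x y))

/-- Non-negative definiteness of a kernel. -/
def NonnegDef (r : ℝ → ℝ → ℝ) : Prop :=
  ∀ u : ℝ → ℝ, MemL2 u → 0 ≤ ∫ p in UI ×ˢ UI, r p.1 p.2 * u p.1 * u p.2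

/-- `μ` is an eigenvalue of the Laplacian operator `L_f` on `L²([0,1])`. -/
def lapEigen (f : ℝ → ℝ → ℝ) (μ : ℝ) : Prop :=
  ∃ u : ℝ → ℝ, MemL2 u ∧ (∫ x in UI, u x ^ 2) ≠ 0 ∧
    ∀ᵐ x ∂(volume.restrict UI), lapApply f u x = μ * u x

/-! ### Integrals of squares on a finite measure space -/

lemma integrable_of_sq {α : Type*} [MeasurableSpace α] {μ : Measure α} [IsFiniteMeasure μ]
    {f : α → ℝ} (hm : AEStronglyMeasurable f μ) (h2 : Integrable (fun x => f x ^ 2) μ) :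
    Integrable f μ := by
  refine Integrable.mono' ((integrable_const (1 : ℝ)).add h2) hm (Eventually.of_forall fun x => ?_)
  simp only [Real.norm_eq_abs, Pi.add_apply]
  nlinarith [sq_abs (f x), sq_nonneg (|f x| - 1), abs_nonneg (f x)]

lemma integral_affine_sq {α : Type*} [MeasurableSpace α] {μ : Measure α} [IsFiniteMeasure μ]
    {f : α → ℝ} (h1 : Integrable f μ) (h2 : Integrable (fun x => f x ^ 2) μ) (a b : ℝ) :
    ∫ x, (a * f x - b) ^ 2 ∂μ
      = a ^ 2 * ∫ x, f x ^ 2 ∂μ - 2 * a * b * ∫ x, f x ∂μ + b ^ 2 * μ.real univ := by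
  have e : (fun x => (a * f x - b) ^ 2)
      = fun x => a ^ 2 * f x ^ 2 - 2 * a * b * f x + b ^ 2 := by
    ext x; ring
  rw [e, integral_add (f := fun x => a ^ 2 * f x ^ 2 - 2 * a * b * f x)
      ((h2.const_mul _).sub (h1.const_mul _)) (integrable_const _),
    integral_sub (h2.const_mul _) (h1.const_mul _), integral_const_mul, integral_const_mul,
    integral_const, smul_eq_mul]
  ring

/-- Cauchy–Schwarz against the constant function `1`. -/
lemma sq_integral_le {α : Type*} [MeasurableSpace α] {μ : Measure α} [IsFiniteMeasure μ]
    {f : α → ℝ} (h1 : Integrable f μ) (h2 : Integrable (fun x => f x ^ 2) μ) :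
    (∫ x, f x ∂μ) ^ 2 ≤ μ.real univ * ∫ x, f x ^ 2 ∂μ := by
  have h0 : 0 ≤ ∫ x, (μ.real univ * f x - ∫ y, f y ∂μ) ^ 2 ∂μ :=
    integral_nonneg fun x => sq_nonneg _
  rw [integral_affine_sq h1 h2] at h0
  rcases (measureReal_nonneg (μ := μ) (s := univ)).eq_or_lt with hz | hp
  · have : μ = 0 := by
      rw [← Measure.measure_univ_eq_zero]
      exact (measureReal_eq_zero_iff).1 hz.symm
    simp [this]
  · refine le_of_mul_le_mul_left ?_ hp
    nlinarith

/-! ### The Laplacian of a graphon as a bounded operator -/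

lemma UI_real : (volume.restrict UI).real univ = 1 := by
  simp [UI]

instance : IsFiniteMeasure (volume.restrict UI) := by
  unfold UI; infer_instance

section
variable {h : ℝ → ℝ → ℝ}

lemma IsGraphon.integrable (hh : IsGraphon h) (μ : Measure ℝ) [IsFiniteMeasure μ] (x : ℝ) :
    Integrable (h x) μ := by
  refine Integrable.mono' (integrable_const (1 : ℝ)) ?_ (Eventually.of_forall fun y => ?_)
  · exact (hh.2.1.comp measurable_prodMk_left).aestronglyMeasurable
  · rw [Real.norm_eq_abs, abs_of_nonneg (hh.2.2 x y).1]; exact (hh.2.2 x y).2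

lemma MemL2.integrable {u : ℝ → ℝ} (hu : MemL2 u) : IntegrableOn u UI :=
  integrable_of_sq hu.1.aestronglyMeasurable hu.2

lemma abs_lapApply_le (hh : IsGraphon h) {u : ℝ → ℝ} (hu : MemL2 u) (x : ℝ) :
    |lapApply h u x| ≤ |u x| + ∫ y in UI, |u y| := by
  have h1 : Integrable (fun y => |u x| + |u y|) (volume.restrict UI) :=
    (integrable_const _).add hu.integrable.abs
  have h2 : ‖lapApply h u x‖ ≤ ∫ y in UI, (|u x| + |u y|) := by
    refine norm_integral_le_of_norm_le h1 (Eventually.of_forall fun y => ?_)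
    rw [Real.norm_eq_abs, abs_mul, abs_of_nonneg (hh.2.2 x y).1]
    have := abs_sub (u x) (u y)
    nlinarith [(hh.2.2 x y).2, abs_nonneg (u x - u y)]
  rw [integral_add (integrable_const _) hu.integrable.abs, integral_const, UI_real] at h2
  simpa using h2

lemma sq_lapApply_le (hh : IsGraphon h) {u : ℝ → ℝ} (hu : MemL2 u) (x : ℝ) :
    lapApply h u x ^ 2 ≤ 2 * u x ^ 2 + 2 * ∫ y in UI, u y ^ 2 := by
  have h1 := abs_lapApply_le hh hu x
  have h2 := sq_integral_le (μ := volume.restrict UI) (f := fun y => |u y|) hu.integrable.abs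
    (by simp only [sq_abs]; exact hu.2)
  simp only [sq_abs, UI_real, one_mul] at h2
  rw [← sq_abs (lapApply h u x), ← sq_abs (u x)]
  have h3 : |lapApply h u x| ^ 2 ≤ (|u x| + ∫ y in UI, |u y|) ^ 2 := by gcongr
  nlinarith [sq_nonneg (|u x| - ∫ y in UI, |u y|)]

lemma MemL2.lapApply (hh : IsGraphon h) {u : ℝ → ℝ} (hu : MemL2 u) : MemL2 (lapApply h u) := by
  have hm : Measurable (_root_.lapApply h u) := by
    refine StronglyMeasurable.measurable ?_
    refine StronglyMeasurable.integral_prod_right'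
      (f := fun p : ℝ × ℝ => h p.1 p.2 * (u p.1 - u p.2)) ?_
    exact (hh.2.1.mul ((hu.1.comp measurable_fst).sub (hu.1.comp measurable_snd))).stronglyMeasurable
  refine ⟨hm, ?_⟩
  refine Integrable.mono' ((Integrable.const_mul hu.2 2).add
    (integrable_const (2 * ∫ y in UI, u y ^ 2)))
    (hm.pow_const 2).aestronglyMeasurable (Eventually.of_forall fun x => ?_)
  rw [Real.norm_eq_abs, abs_of_nonneg (sq_nonneg _)]
  exact sq_lapApply_le hh hu x

lemma integral_sq_lapApply_le_four (hh : IsGraphon h) {u : ℝ → ℝ} (hu : MemL2 u) :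
    ∫ x in UI, lapApply h u x ^ 2 ≤ 4 * ∫ x in UI, u x ^ 2 := by
  have := integral_mono (MemL2.lapApply hh hu).2 ((Integrable.const_mul hu.2 2).add
    (integrable_const (2 * ∫ y in UI, u y ^ 2))) (fun x => sq_lapApply_le hh hu x)
  simp only [Pi.add_apply] at this
  rw [integral_add (Integrable.const_mul hu.2 2) (integrable_const _), integral_const_mul,
    integral_const, UI_real] at this
  simp only [smul_eq_mul] at this
  linarith

lemma l2_eq_sqrt (u : ℝ → ℝ) : l2 u = √(∫ x in UI, u x ^ 2) := by
  rw [l2, Real.sqrt_eq_rpow]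

lemma lapNorm_nonneg (f : ℝ → ℝ → ℝ) : 0 ≤ lapNorm f := by
  refine Real.sSup_nonneg ?_
  rintro c ⟨u, -, -, rfl⟩
  rw [l2_eq_sqrt]; positivity

/-- The supremum defining `lapNorm h` is over a bounded set, hence is a genuine operator norm:
it controls `L_h` on all of `L²`. -/
lemma integral_sq_lapApply_le (hh : IsGraphon h) {u : ℝ → ℝ} (hu : MemL2 u) :
    ∫ x in UI, lapApply h u x ^ 2 ≤ lapNorm h ^ 2 * ∫ x in UI, u x ^ 2 := by
  have hs : 0 ≤ ∫ x in UI, u x ^ 2 := integral_nonneg fun x => sq_nonneg _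
  have hs' : 0 ≤ ∫ x in UI, lapApply h u x ^ 2 := integral_nonneg fun x => sq_nonneg _
  rcases hs.eq_or_lt with hz | hp
  · have := integral_sq_lapApply_le_four hh hu
    rw [← hz] at this ⊢
    linarith
  set s := ∫ x in UI, u x ^ 2 with hsdef
  have hbdd : BddAbove {c | ∃ u : ℝ → ℝ, MemL2 u ∧ l2 u = 1 ∧ c = l2 (lapApply h u)} := by
    refine ⟨√4, ?_⟩
    rintro c ⟨v, hv, hv1, rfl⟩
    rw [l2_eq_sqrt, Real.sqrt_eq_one] at hv1
    rw [l2_eq_sqrt]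
    have := integral_sq_lapApply_le_four hh hv
    exact Real.sqrt_le_sqrt (by linarith)
  have hsq : (√s)⁻¹ ^ 2 = s⁻¹ := by rw [inv_pow, Real.sq_sqrt hs]
  have hv : MemL2 (fun x => (√s)⁻¹ * u x) := by
    refine ⟨hu.1.const_mul _, ?_⟩
    simp only [mul_pow]
    exact Integrable.const_mul hu.2 _
  have hv1 : l2 (fun x => (√s)⁻¹ * u x) = 1 := by
    rw [l2_eq_sqrt, Real.sqrt_eq_one]
    simp only [mul_pow, integral_const_mul, hsq]
    exact inv_mul_cancel₀ hp.ne'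
  have hLv : ∀ x, lapApply h (fun x => (√s)⁻¹ * u x) x = (√s)⁻¹ * lapApply h u x := by
    intro x
    rw [lapApply, lapApply, ← integral_const_mul]
    congr 1; ext y; ring
  have hle : l2 (lapApply h (fun x => (√s)⁻¹ * u x)) ≤ lapNorm h :=
    le_csSup hbdd ⟨_, hv, hv1, rfl⟩
  rw [l2_eq_sqrt, Real.sqrt_le_left (lapNorm_nonneg h)] at hle
  simp only [hLv, mul_pow, integral_const_mul, hsq] at hle
  rwa [inv_mul_le_iff₀ hp, mul_comm] at hle

/-! ### Averaged degrees are bounded by the operator norm -/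

lemma integrable_degFun (hh : IsGraphon h) (μ : Measure ℝ) [IsFiniteMeasure μ]
    (ν : Measure ℝ) [IsFiniteMeasure ν] : Integrable (fun x => ∫ y, h x y ∂ν) μ := by
  have hm : StronglyMeasurable (fun x => ∫ y, h x y ∂ν) :=
    StronglyMeasurable.integral_prod_right' (f := fun p : ℝ × ℝ => h p.1 p.2)
      hh.2.1.stronglyMeasurable
  refine Integrable.mono' (integrable_const (ν.real univ)) hm.aestronglyMeasurable
    (Eventually.of_forall fun x => ?_)
  have := norm_integral_le_of_norm_le (μ := ν) (f := h x) (integrable_const (1 : ℝ))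
    (Eventually.of_forall fun y => by
      rw [Real.norm_eq_abs, abs_of_nonneg (hh.2.2 x y).1]; exact (hh.2.2 x y).2)
  simpa using this

/-- Testing `L_h` on the indicator of `(a, b]`: the self-interaction of the interval only
contributes the quadratically small error `(b - a)²`. -/
lemma integral_degFun_le_add_sq (hh : IsGraphon h) {a b : ℝ} (ha : 0 ≤ a) (hab : a ≤ b)
    (hb : b ≤ 1) :
    ∫ x in a..b, degFun h x ≤ lapNorm h * (b - a) + (b - a) ^ 2 := by
  rw [intervalIntegral.integral_of_le hab]
  set S := Ioc a b with hS
  have hSm : MeasurableSet S := measurableSet_Ioc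
  have hSU : S ⊆ UI := fun x hx => ⟨ha.trans hx.1.le, hx.2.trans hb⟩
  have hvol : (volume.restrict S).real univ = b - a := by
    simp [hS, hab]
  have hvol' : (volume.restrict UI).real S = b - a := by
    rw [measureReal_restrict_apply hSm, inter_eq_left.2 hSU]; simp [hS, hab]
  set w : ℝ → ℝ := S.indicator 1 with hw
  have hw2 : (fun x => w x ^ 2) = S.indicator 1 := by
    ext x; by_cases hx : x ∈ S <;> simp [hw, hx]
  have hwL : MemL2 w := by
    refine ⟨measurable_one.indicator hSm, ?_⟩
    rw [hw2]
    exact (integrable_const (1 : ℝ)).indicator hSm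
  have hLw := MemL2.lapApply hh hwL
  have hwint : ∫ x in UI, w x ^ 2 = b - a := by
    rw [hw2, integral_indicator_one hSm, hvol']
  have hLS : ∀ x ∈ S, degFun h x - (b - a) ≤ lapApply h w x := by
    intro x hx
    have e : lapApply h w x = degFun h x - ∫ y in S, h x y := by
      have e1 : (fun y => h x y * (w x - w y)) = fun y => h x y - S.indicator (h x) y := by
        ext y
        by_cases hy : y ∈ S <;> simp [hw, hx, hy]
      rw [lapApply, e1, integral_sub (hh.integrable _ x) ((hh.integrable _ x).indicator hSm),
        setIntegral_indicator hSm, inter_eq_right.2 hSU, degFun]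
    have e2 : ∫ y in S, h x y ≤ b - a := by
      have := integral_mono (hh.integrable (volume.restrict S) x) (integrable_const (1 : ℝ))
        (fun y => (hh.2.2 x y).2)
      rwa [integral_const, hvol, smul_eq_mul, mul_one] at this
    linarith
  have h1 : ∫ x in S, degFun h x ≤ (∫ x in S, lapApply h w x) + (b - a) ^ 2 := by
    have := setIntegral_mono_on (μ := volume) (s := S)
      ((integrable_degFun hh (volume.restrict S) (volume.restrict UI)).sub
        (integrable_const (b - a))) (hLw.integrable.mono_set hSU) hSm hLS
    simp only [Pi.sub_apply] at this
    rw [integral_sub (integrable_degFun hh _ _) (integrable_const _), integral_const, hvol,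
      smul_eq_mul] at this
    unfold degFun
    linarith
  have h2 : (∫ x in S, lapApply h w x) ^ 2 ≤ (lapNorm h * (b - a)) ^ 2 := by
    calc (∫ x in S, lapApply h w x) ^ 2 ≤ (b - a) * ∫ x in S, lapApply h w x ^ 2 := by
          have := sq_integral_le (μ := volume.restrict S) (hLw.integrable.mono_set hSU)
            (hLw.2.mono_set hSU)
          rwa [hvol] at this
      _ ≤ (b - a) * ∫ x in UI, lapApply h w x ^ 2 := by
          refine mul_le_mul_of_nonneg_left ?_ (by linarith)
          exact setIntegral_mono_set hLw.2 (Eventually.of_forall fun x => sq_nonneg _)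
            hSU.eventuallyLE
      _ ≤ (b - a) * (lapNorm h ^ 2 * (b - a)) := by
          refine mul_le_mul_of_nonneg_left ?_ (by linarith)
          rw [← hwint]
          exact integral_sq_lapApply_le hh hwL
      _ = (lapNorm h * (b - a)) ^ 2 := by ring
  have h3 := abs_le_of_sq_le_sq' h2 (mul_nonneg (lapNorm_nonneg h) (by linarith))
  linarith [h3.2]

/-- Repeated bisection makes the error in `integral_degFun_le_add_sq` arbitrarily small. -/
lemma integral_degFun_le_add (hh : IsGraphon h) (n : ℕ) : ∀ {a b : ℝ}, 0 ≤ a → a ≤ b → b ≤ 1 →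
    ∫ x in a..b, degFun h x ≤ lapNorm h * (b - a) + (b - a) ^ 2 * (1 / 2) ^ n := by
  induction n with
  | zero =>
    intro a b ha hab hb
    simpa using integral_degFun_le_add_sq hh ha hab hb
  | succ n ih =>
    intro a b ha hab hb
    have hint : ∀ s t : ℝ, IntervalIntegrable (degFun h) volume s t := fun s t =>
      ⟨integrable_degFun hh _ _, integrable_degFun hh _ _⟩
    rw [← intervalIntegral.integral_add_adjacent_intervals (hint a ((a + b) / 2)) (hint _ b)]
    have h1 := ih (a := a) (b := (a + b) / 2) ha (by linarith) (by linarith)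
    have h2 := ih (a := (a + b) / 2) (b := b) (by linarith) (by linarith) hb
    have e : (b - a) ^ 2 * (1 / 2 : ℝ) ^ (n + 1)
      = ((a + b) / 2 - a) ^ 2 * (1 / 2) ^ n + (b - (a + b) / 2) ^ 2 * (1 / 2) ^ n := by
      rw [pow_succ]; ring
    linarith

lemma integral_degFun_le (hh : IsGraphon h) {a b : ℝ} (ha : 0 ≤ a) (hab : a ≤ b) (hb : b ≤ 1) :
    ∫ x in a..b, degFun h x ≤ lapNorm h * (b - a) := by
  have ht : Tendsto (fun n : ℕ => lapNorm h * (b - a) + (b - a) ^ 2 * (1 / 2 : ℝ) ^ n) atTop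
      (nhds (lapNorm h * (b - a) + (b - a) ^ 2 * 0)) :=
    ((tendsto_pow_atTop_nhds_zero_of_lt_one (by norm_num) (by norm_num)).const_mul _).const_add _
  rw [mul_zero, add_zero] at ht
  exact ge_of_tendsto' ht fun n => integral_degFun_le_add hh n ha hab hb

end

/-! ### The partition of the unit interval into blocks -/

section
variable {N : ℕ}

lemma measurableSet_blk (i : Fin N) : MeasurableSet (blk N i) := measurableSet_Ico

lemma mem_blk_iff (hN : 0 < N) {i : Fin N} {x : ℝ} : x ∈ blk N i ↔ 0 ≤ x ∧ ⌊N * x⌋₊ = i := by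
  have hN' : (0 : ℝ) < N := by exact_mod_cast hN
  rw [blk, mem_Ico, div_le_iff₀ hN', lt_div_iff₀ hN']
  constructor
  · rintro ⟨h1, h2⟩
    have h0 : 0 ≤ x := by
      by_contra hx
      have : (0 : ℝ) ≤ (i : ℕ) := Nat.cast_nonneg _
      nlinarith
    exact ⟨h0, (Nat.floor_eq_iff (by positivity)).2 ⟨by linarith, by linarith⟩⟩
  · rintro ⟨h0, h1⟩
    have := (Nat.floor_eq_iff (by positivity)).1 h1
    exact ⟨by linarith [this.1], by linarith [this.2]⟩

lemma blk_disjoint (hN : 0 < N) : Pairwise (Function.onFun Disjoint (blk N)) := by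
  intro i j hij
  refine Set.disjoint_left.2 fun x hi hj => hij (Fin.ext ?_)
  rw [mem_blk_iff hN] at hi hj
  exact hi.2.symm.trans hj.2

lemma iUnion_blk (hN : 0 < N) : ⋃ i, blk N i = Ico (0 : ℝ) 1 := by
  have hN' : (0 : ℝ) < N := by exact_mod_cast hN
  ext x
  simp only [mem_iUnion, mem_blk_iff hN, mem_Ico]
  constructor
  · rintro ⟨i, h0, hi⟩
    refine ⟨h0, ?_⟩
    have h1 := Nat.lt_of_floor_lt (hi ▸ i.2 : ⌊N * x⌋₊ < N)
    nlinarith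
  · rintro ⟨h0, h1⟩
    exact ⟨⟨⌊N * x⌋₊, (Nat.floor_lt (by positivity)).2 (by nlinarith)⟩, h0, rfl⟩

lemma blk_subset_UI (hN : 0 < N) (i : Fin N) : blk N i ⊆ UI :=
  ((subset_iUnion (blk N) i).trans (iUnion_blk hN).subset).trans Ico_subset_Icc_self

/-- The blocks cover `[0,1]` up to the point `1`. -/
lemma restrict_UI (hN : 0 < N) :
    volume.restrict UI = volume.restrict (⋃ i, blk N i) := by
  rw [iUnion_blk hN, UI]
  exact Measure.restrict_congr_set Ico_ae_eq_Icc.symm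

instance (i : Fin N) : IsFiniteMeasure (volume.restrict (blk N i)) := by
  unfold blk; infer_instance

lemma blk_real (hN : 0 < N) (i : Fin N) : (volume.restrict (blk N i)).real univ = 1 / N := by
  have hN' : (0 : ℝ) < N := by exact_mod_cast hN
  have : ((i : ℕ) : ℝ) / N ≤ ((i : ℕ) + 1 : ℝ) / N := by gcongr; linarith
  rw [measureReal_restrict_apply_univ, blk, Real.volume_real_Ico_of_le this]
  ring

lemma integrableOn_UI_iff (hN : 0 < N) {f : ℝ → ℝ} :
    IntegrableOn f UI ↔ ∀ i, IntegrableOn f (blk N i) := by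
  rw [IntegrableOn, restrict_UI hN]
  exact integrableOn_finite_iUnion

lemma integral_UI (hN : 0 < N) {f : ℝ → ℝ} (hf : ∀ i, IntegrableOn f (blk N i)) :
    ∫ x in UI, f x = ∑ i, ∫ x in blk N i, f x := by
  rw [restrict_UI hN]
  exact integral_iUnion_fintype measurableSet_blk (blk_disjoint hN) hf

/-- The step function with value `c i` on the `i`-th block. -/
def stepFun (N : ℕ) (c : Fin N → ℝ) (x : ℝ) : ℝ := ∑ i, (blk N i).indicator (fun _ => c i) x

lemma stepFun_of_mem (hN : 0 < N) (c : Fin N → ℝ) {i : Fin N} {x : ℝ} (hx : x ∈ blk N i) :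
    stepFun N c x = c i := by
  rw [stepFun, Finset.sum_eq_single i]
  · simp [hx]
  · intro j _ hj
    exact indicator_of_notMem (fun hxj => Set.disjoint_left.1 (blk_disjoint hN hj) hxj hx) _
  · simp

lemma memL2_stepFun (hN : 0 < N) (c : Fin N → ℝ) : MemL2 (stepFun N c) := by
  refine ⟨Finset.measurable_fun_sum _ fun i _ =>
    measurable_const.indicator (measurableSet_blk i), ?_⟩
  rw [integrableOn_UI_iff hN]
  intro i
  refine (integrable_const (c i ^ 2)).congr ?_
  filter_upwards [ae_restrict_mem (measurableSet_blk i)] with x hx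
  rw [stepFun_of_mem hN c hx]

lemma integral_sq_stepFun (hN : 0 < N) (c : Fin N → ℝ) :
    ∫ x in UI, stepFun N c x ^ 2 = ∑ i, c i ^ 2 / N := by
  rw [integral_UI hN ((integrableOn_UI_iff hN).1 (memL2_stepFun hN c).2)]
  refine Finset.sum_congr rfl fun i _ => ?_
  rw [setIntegral_congr_fun (g := fun _ => c i ^ 2) (measurableSet_blk i)
    (fun x hx => by simp only [stepFun_of_mem hN c hx]), integral_const, blk_real hN, smul_eq_mul]
  ring

end

/-! ### Comparison of the Laplacians of `h` and of its block approximant -/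

section
variable {h : ℝ → ℝ → ℝ} {N : ℕ}

/-- The mass of `h` on the `(i, j)`-th block. -/
def blockMass (h : ℝ → ℝ → ℝ) (N : ℕ) (i j : Fin N) : ℝ := ∫ x in blk N i, ∫ y in blk N j, h x y

lemma blockMass_nonneg (hh : IsGraphon h) (i j : Fin N) : 0 ≤ blockMass h N i j :=
  integral_nonneg fun x => integral_nonneg fun y => (hh.2.2 x y).1

lemma integral_blk_prod (hh : IsGraphon h) (i j : Fin N) :
    ∫ p in blk N i ×ˢ blk N j, h p.1 p.2 = blockMass h N i j := by
  rw [Measure.volume_eq_prod, ← Measure.prod_restrict, integral_prod]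
  · rfl
  · refine Integrable.mono' (integrable_const (1 : ℝ)) hh.2.1.aestronglyMeasurable
      (Eventually.of_forall fun p => ?_)
    rw [Real.norm_eq_abs, abs_of_nonneg (hh.2.2 p.1 p.2).1]; exact (hh.2.2 p.1 p.2).2

/-- The average of the degree function over a block, i.e. the degree of the block approximant,
is at most the operator norm. -/
lemma sum_blockMass_le (hh : IsGraphon h) (hN : 0 < N) (i : Fin N) :
    N * ∑ j, blockMass h N i j ≤ lapNorm h := by
  have hN' : (0 : ℝ) < N := by exact_mod_cast hN
  have e : ∑ j, blockMass h N i j = ∫ x in blk N i, degFun h x := by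
    simp only [blockMass]
    rw [← integral_finsetSum _ fun j _ => integrable_degFun hh _ _]
    congr 1; ext x
    rw [degFun, integral_UI hN fun j => hh.integrable _ x]
  have hle : ((i : ℕ) : ℝ) / N ≤ ((i : ℕ) + 1 : ℝ) / N := by gcongr; linarith
  have hi : ((i : ℕ) : ℝ) + 1 ≤ N := by exact_mod_cast i.2
  have := integral_degFun_le hh (a := ((i : ℕ) : ℝ) / N) (b := (((i : ℕ) : ℝ) + 1) / N)
    (by positivity) hle ((div_le_one hN').2 hi)
  rw [intervalIntegral.integral_of_le hle, ← integral_Ico_eq_integral_Ioc] at this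
  have e2 : (((i : ℕ) : ℝ) + 1) / N - ((i : ℕ) : ℝ) / N = 1 / N := by ring
  rw [e2] at this
  rw [e]
  calc N * ∫ x in blk N i, degFun h x ≤ N * (lapNorm h * (1 / N)) := by
        unfold blk; gcongr
    _ = lapNorm h := by field_simp

/-- Block integrals of `L_h` applied to a step function: this is the action of the block
approximant on step functions. -/
lemma integral_lapApply_stepFun (hh : IsGraphon h) (hN : 0 < N) (c : Fin N → ℝ) (i : Fin N) :
    ∫ x in blk N i, lapApply h (stepFun N c) x = ∑ j, blockMass h N i j * (c i - c j) := by
  have e : ∀ x ∈ blk N i, lapApply h (stepFun N c) x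
      = ∑ j, (∫ y in blk N j, h x y) * (c i - c j) := by
    intro x hx
    have e1 : ∀ j, EqOn (fun y => h x y * (stepFun N c x - stepFun N c y))
        (fun y => h x y * (c i - c j)) (blk N j) := fun j y hy => by
      simp only [stepFun_of_mem hN c hx, stepFun_of_mem hN c hy]
    rw [lapApply, integral_UI hN]
    · refine Finset.sum_congr rfl fun j _ => ?_
      rw [setIntegral_congr_fun (measurableSet_blk j) (e1 j), integral_mul_const]
    · intro j
      rw [integrableOn_congr_fun (e1 j) (measurableSet_blk j)]
      exact (hh.integrable _ x).mul_const _
  rw [setIntegral_congr_fun (measurableSet_blk i) e,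
    integral_finsetSum _ fun j _ => (integrable_degFun hh _ _).mul_const _]
  refine Finset.sum_congr rfl fun j _ => ?_
  rw [integral_mul_const]; rfl

/-- On the `i`-th block the Laplacian of a block kernel `g` with values `γ` is affine in `u`:
multiplication by the degree minus the integral against `g`. -/
lemma lapApply_block {g : ℝ → ℝ → ℝ} {γ : Fin N → Fin N → ℝ} (hN : 0 < N)
    (hg : ∀ i j, ∀ x ∈ blk N i, ∀ y ∈ blk N j, g x y = γ i j)
    {u : ℝ → ℝ} (hu : MemL2 u) {i : Fin N} {x : ℝ} (hx : x ∈ blk N i) :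
    lapApply g u x = (∑ j, γ i j / N) * u x - ∑ j, γ i j * ∫ y in blk N j, u y := by
  have e1 : ∀ j, EqOn (fun y => g x y * (u x - u y)) (fun y => γ i j * (u x - u y)) (blk N j) :=
    fun j y hy => by simp only [hg i j x hx y hy]
  have hui : ∀ j, IntegrableOn u (blk N j) := (integrableOn_UI_iff hN).1 hu.integrable
  rw [lapApply, integral_UI hN, Finset.sum_mul, ← Finset.sum_sub_distrib]
  · refine Finset.sum_congr rfl fun j _ => ?_
    rw [setIntegral_congr_fun (measurableSet_blk j) (e1 j), integral_const_mul,
      integral_sub (integrable_const _) (hui j), integral_const, blk_real hN, smul_eq_mul]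
    ring
  · intro j
    rw [integrableOn_congr_fun (e1 j) (measurableSet_blk j)]
    exact ((integrable_const _).sub (hui j)).const_mul _

end

/-- **The `N`-block approximant does not increase the Laplacian operator norm.** -/
theorem block_approximant_norm
    (h : ℝ → ℝ → ℝ) (hh : IsGraphon h) (N : ℕ) (hN : 0 < N)
    (g : ℝ → ℝ → ℝ) (hg : IsBlockGraphon N g)
    (hval : ∀ i j : Fin N,
      g (((i : ℕ) : ℝ) / N) (((j : ℕ) : ℝ) / N)
        = (N : ℝ) ^ 2 * ∫ p in blk N i ×ˢ blk N j, h p.1 p.2) :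
    lapNorm g ≤ lapNorm h := by
  have hN' : (0 : ℝ) < N := by exact_mod_cast hN
  set K := lapNorm h with hK
  have hK0 : 0 ≤ K := lapNorm_nonneg h
  have hgval : ∀ i j, ∀ x ∈ blk N i, ∀ y ∈ blk N j,
      g x y = (N : ℝ) ^ 2 * blockMass h N i j := by
    have hl : ∀ i : Fin N, ((i : ℕ) : ℝ) / N ∈ blk N i := fun i =>
      ⟨le_rfl, by gcongr; linarith⟩
    intro i j x hx y hy
    rw [hg i j x hx _ (hl i) y hy _ (hl j), hval, integral_blk_prod hh]
  refine Real.sSup_le ?_ hK0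
  rintro c ⟨u, hu, hu1, rfl⟩
  rw [l2_eq_sqrt, Real.sqrt_eq_one] at hu1
  rw [l2_eq_sqrt, Real.sqrt_le_left hK0]
  have hui : ∀ i, IntegrableOn u (blk N i) := (integrableOn_UI_iff hN).1 hu.integrable
  have hu2 : ∀ i, IntegrableOn (fun x => u x ^ 2) (blk N i) := (integrableOn_UI_iff hN).1 hu.2
  -- `m` lists the block averages of `u`, `d` the degrees of `g`
  set m : Fin N → ℝ := fun i => N * ∫ x in blk N i, u x with hm
  set d : Fin N → ℝ := fun i => N * ∑ j, blockMass h N i j with hd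
  set b : Fin N → ℝ := fun i => N * ∑ j, blockMass h N i j * m j with hb
  have hum : ∀ i, ∫ x in blk N i, u x = m i / N := fun i => by
    simp only [hm]; field_simp
  have hd0 : ∀ i, 0 ≤ d i := fun i =>
    mul_nonneg hN'.le (Finset.sum_nonneg fun j _ => blockMass_nonneg hh i j)
  have hdK : ∀ i, d i ≤ K := fun i => sum_blockMass_le hh hN i
  have hLg : ∀ i, EqOn (fun x => lapApply g u x ^ 2) (fun x => (d i * u x - b i) ^ 2)
      (blk N i) := by
    intro i x hx
    have e1 : ∑ j, (N : ℝ) ^ 2 * blockMass h N i j / N = d i := by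
      simp only [hd, Finset.mul_sum]
      exact Finset.sum_congr rfl fun j _ => by field_simp
    have e2 : ∑ j, (N : ℝ) ^ 2 * blockMass h N i j * ∫ y in blk N j, u y = b i := by
      simp only [hb, Finset.mul_sum]
      exact Finset.sum_congr rfl fun j _ => by rw [hum]; field_simp
    simp only [lapApply_block hN hgval hu hx, e1, e2]
  have hint : ∀ i, IntegrableOn (fun x => lapApply g u x ^ 2) (blk N i) := by
    intro i
    rw [integrableOn_congr_fun (hLg i) (measurableSet_blk i)]
    have e : (fun x => (d i * u x - b i) ^ 2)
        = fun x => d i ^ 2 * u x ^ 2 - 2 * d i * b i * u x + b i ^ 2 := by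
      ext x; ring
    rw [e]
    exact (((hu2 i).const_mul _).sub ((hui i).const_mul _)).add (integrable_const _)
  -- Pythagoras on each block: mean part plus fluctuation part
  have hblk : ∀ i, ∫ x in blk N i, lapApply g u x ^ 2
      = d i ^ 2 * ((∫ x in blk N i, u x ^ 2) - m i ^ 2 / N) + (d i * m i - b i) ^ 2 / N := by
    intro i
    rw [setIntegral_congr_fun (measurableSet_blk i) (hLg i),
      integral_affine_sq (hui i) (hu2 i), blk_real hN, hum]
    ring
  have hfluc : ∀ i, 0 ≤ (∫ x in blk N i, u x ^ 2) - m i ^ 2 / N := by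
    intro i
    have := sq_integral_le (hui i) (hu2 i)
    rw [blk_real hN, hum, div_pow, one_div, inv_mul_eq_div, le_div_iff₀ hN'] at this
    have e : m i ^ 2 / (N : ℝ) ^ 2 * N = m i ^ 2 / N := by field_simp
    linarith
  -- the mean part is governed by `L_h` on the step function of block averages
  have hLw := MemL2.lapApply hh (memL2_stepFun hN m)
  have hLw1 := (integrableOn_UI_iff hN).1 hLw.integrable
  have hLw2 := (integrableOn_UI_iff hN).1 hLw.2
  have hmean : ∑ i, (d i * m i - b i) ^ 2 / N ≤ K ^ 2 * ∑ i, m i ^ 2 / N := by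
    have h0 := integral_sq_lapApply_le hh (memL2_stepFun hN m)
    rw [integral_sq_stepFun hN] at h0
    refine le_trans ?_ h0
    rw [integral_UI hN hLw2]
    refine Finset.sum_le_sum fun i _ => ?_
    have h1 := sq_integral_le (hLw1 i) (hLw2 i)
    have e : d i * m i - b i = N * ∑ j, blockMass h N i j * (m i - m j) := by
      simp only [hd, hb, mul_sub, Finset.sum_sub_distrib, Finset.sum_mul, mul_assoc]
    rw [blk_real hN, integral_lapApply_stepFun hh hN] at h1
    rw [e, mul_pow, div_le_iff₀ hN']
    calc (N : ℝ) ^ 2 * (∑ j, blockMass h N i j * (m i - m j)) ^ 2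
        ≤ (N : ℝ) ^ 2 * (1 / N * ∫ x in blk N i, lapApply h (stepFun N m) x ^ 2) := by gcongr
      _ = (∫ x in blk N i, lapApply h (stepFun N m) x ^ 2) * N := by field_simp
  calc ∫ x in UI, lapApply g u x ^ 2
      = ∑ i, d i ^ 2 * ((∫ x in blk N i, u x ^ 2) - m i ^ 2 / N)
        + ∑ i, (d i * m i - b i) ^ 2 / N := by
        rw [integral_UI hN hint, ← Finset.sum_add_distrib]
        exact Finset.sum_congr rfl fun i _ => hblk i
    _ ≤ ∑ i, K ^ 2 * ((∫ x in blk N i, u x ^ 2) - m i ^ 2 / N) + K ^ 2 * ∑ i, m i ^ 2 / N := by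
        refine add_le_add (Finset.sum_le_sum fun i _ => ?_) hmean
        exact mul_le_mul_of_nonneg_right (pow_le_pow_left₀ (hd0 i) (hdK i) 2) (hfluc i)
    _ = K ^ 2 * ∑ i, ∫ x in blk N i, u x ^ 2 := by
        rw [← Finset.mul_sum, ← mul_add, Finset.sum_sub_distrib, sub_add_cancel]
    _ = K ^ 2 := by rw [← integral_UI hN hu2, hu1, mul_one]
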